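/- arXiv:1903.00236 — 3 statements merged into one kernel-verified Lean document; each statement's English description precedes it below -/
import Mathlib

section
/- Suppose X is complete, A is closed, I and φ are lower semicontinuous on X, and there exist a feasible point x₀ ∈ Ω, λ₀ > 0 and δ > 0 such that (i) I is Lipschitz continuous on an open set containing the set C(δ,λ₀) = {x ∈ Ω_δ : Φ_{λ₀}(x) < I(x₀)}, and (ii) there exists a > 0 such that φ↓_A(x) ≤ −a for all x ∈ C(δ,λ₀) \ Ω. Then the penalty function Φ_λ is globally exact (i.e. there exists λ* ≥ 0 such that for all λ ≥ λ* the set of global minimizers of Φ_λ on A coincides with the set of global minimizers of I on Ω) if and only if there exists λ ≥ 0 such that Φ_λ is bounded below on A. -/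
open Filter Metric Set Topology
open scoped ENNReal NNReal

/-- The rate of steepest descent of `g : X → EReal` with respect to the set `K` at `x`:
`g↓_K(x) = liminf_{y→x, y∈K, y≠x} (g(y) − g(x))/d(y,x)` (equal to `+∞` at isolated points of `K`). -/
noncomputable def rateOfDescent {X : Type*} [MetricSpace X] (g : X → EReal) (K : Set X)
    (x : X) : EReal :=
  Filter.liminf (fun y => (g y - g x) * (((dist y x)⁻¹ : ℝ) : EReal)) (nhdsWithin x (K \ {x}))

/-!
If `Φ_λ` is bounded below on `A` for some `λ`, then a point of `A` where a larger `Φ_λ` is still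
below the optimal value `I*` must have `φ` small, so for large `λ` it lies in `C(δ, λ₀)`. Ekeland's
variational principle applied to `Φ_λ` yields such a point `y` at which `Φ_λ` does not decrease with
slope `1`. But if `y ∉ Ω`, moving along the steepest descent of `φ` decreases `λφ` at a rate close
to `λa` while `I` grows at most at rate `L`, which is impossible once `λa > L + 1`. Hence
`Φ_λ ≥ I*` on `A` for some `λ`, and any further increase of `λ` excludes infeasible minimizers.
-/

lemma isComplete_of_isClosed_subset {X : Type*} [UniformSpace X] {s t : Set X}
    (hs : IsComplete s) (ht : IsClosed t) (hts : t ⊆ s) : IsComplete t := by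
  intro F hF hFt
  obtain ⟨x, -, hx⟩ := hs F hF (hFt.trans (principal_mono.2 hts))
  have : F.NeBot := hF.1
  exact ⟨x, isClosed_iff_clusterPt.1 ht x ((ClusterPt.of_le_nhds hx).mono hFt), hx⟩

lemma lowerSemicontinuousOn_ereal_add {Y : Type*} [TopologicalSpace Y] {s : Set Y}
    {g h : Y → EReal} (hg : LowerSemicontinuousOn g s) (hh : LowerSemicontinuousOn h s) :
    LowerSemicontinuousOn (fun y => g y + h y) s := by
  intro y hy
  by_cases hgy : g y = ⊥
  · exact fun c hc => absurd hc (by simp [hgy])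
  by_cases hhy : h y = ⊥
  · exact fun c hc => absurd hc (by simp [hhy])
  exact LowerSemicontinuousWithinAt.add' (hg y hy) (hh y hy)
    (EReal.continuousAt_add (.inr hhy) (.inl hgy))

section Ekeland

variable {X : Type*}

/-- The set of points of `A` that lie below `u` in the order `z ≼ u ↔ f z + d(z, u) ≤ f u` used in
the proof of Ekeland's variational principle. -/
def ekelandSet [PseudoMetricSpace X] (f : X → EReal) (A : Set X) (u : X) : Set X :=
  {z | z ∈ A ∧ f z + ((dist z u : ℝ) : EReal) ≤ f u}

section PseudoMetricSpace

variable [PseudoMetricSpace X] {f : X → EReal} {A : Set X} {u v : X}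

lemma self_mem_ekelandSet (hu : u ∈ A) : u ∈ ekelandSet f A u := by
  simp [ekelandSet, hu]

lemma le_of_mem_ekelandSet (hv : v ∈ ekelandSet f A u) : f v ≤ f u :=
  (le_add_of_nonneg_right (EReal.coe_nonneg.2 dist_nonneg)).trans hv.2

lemma ekelandSet_subset (hv : v ∈ ekelandSet f A u) : ekelandSet f A v ⊆ ekelandSet f A u := by
  refine fun w hw => ⟨hw.1, ?_⟩
  calc f w + ((dist w u : ℝ) : EReal)
      ≤ f w + ((dist w v + dist v u : ℝ) : EReal) := by
        gcongr
        exact dist_triangle w v u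
    _ = f w + ((dist w v : ℝ) : EReal) + ((dist v u : ℝ) : EReal) := by
        rw [EReal.coe_add, add_assoc]
    _ ≤ f v + ((dist v u : ℝ) : EReal) := by
        gcongr
        exact hw.2
    _ ≤ f u := hv.2

lemma isClosed_ekelandSet (hA : IsClosed A) (hf : LowerSemicontinuousOn f A) (u : X) :
    IsClosed (ekelandSet f A u) := by
  have hdist : Continuous fun z => ((dist z u : ℝ) : EReal) :=
    continuous_coe_real_ereal.comp (continuous_id.dist continuous_const)
  have hlsc :=
    lowerSemicontinuousOn_ereal_add hf (hdist.lowerSemicontinuous.lowerSemicontinuousOn A)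
  obtain ⟨v, hv, hAv⟩ := lowerSemicontinuousOn_iff_preimage_Iic.1 hlsc (f u)
  have hinter : ekelandSet f A u = A ∩ v := hAv
  exact hinter ▸ hA.inter hv

lemma exists_ekelandSet_subset_closedBall {b ε : ℝ} (hb : ∀ z ∈ A, (b : EReal) ≤ f z)
    (hu : u ∈ A) (hfu : f u ≠ ⊤) (hε : 0 < ε) :
    ∃ v ∈ ekelandSet f A u, ekelandSet f A v ⊆ closedBall v ε := by
  obtain ⟨i, hi⟩ : ∃ i : ℝ, sInf (f '' ekelandSet f A u) = i := by
    refine ⟨_, (EReal.coe_toReal (ne_of_lt ?_) (ne_of_gt ?_)).symm⟩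
    · exact (sInf_le (mem_image_of_mem f (self_mem_ekelandSet hu))).trans_lt hfu.lt_top
    · refine (EReal.bot_lt_coe b).trans_le (le_sInf ?_)
      rintro _ ⟨z, hz, rfl⟩
      exact hb z hz.1
  have hlt : sInf (f '' ekelandSet f A u) < ((i + ε : ℝ) : EReal) := by
    rw [hi]
    exact_mod_cast lt_add_of_pos_right i hε
  obtain ⟨_, ⟨v, hv, rfl⟩, hfv⟩ := sInf_lt_iff.1 hlt
  refine ⟨v, hv, fun z hz => ?_⟩
  have hfz : (i : EReal) ≤ f z :=
    hi ▸ sInf_le (mem_image_of_mem f (ekelandSet_subset hv hz))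
  have hdist : ((i + dist z v : ℝ) : EReal) < ((i + ε : ℝ) : EReal) :=
    calc ((i + dist z v : ℝ) : EReal) = i + ((dist z v : ℝ) : EReal) := EReal.coe_add _ _
      _ ≤ f z + ((dist z v : ℝ) : EReal) := by gcongr
      _ ≤ f v := hz.2
      _ < ((i + ε : ℝ) : EReal) := hfv
  exact mem_closedBall.2 (lt_of_add_lt_add_left (EReal.coe_lt_coe_iff.1 hdist)).le

lemma exists_seq_ekelandSet_subset_closedBall {b : ℝ} (hb : ∀ z ∈ A, (b : EReal) ≤ f z)
    (hu : u ∈ A) (hfu : f u ≠ ⊤) :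
    ∃ w : ℕ → X, w 0 ∈ ekelandSet f A u ∧ (∀ n, w (n + 1) ∈ ekelandSet f A (w n)) ∧
      ∀ n : ℕ, ekelandSet f A (w n) ⊆ closedBall (w n) (1 / ((n : ℝ) + 1)) := by
  have hstep (n : ℕ) (p : {p // p ∈ A ∧ f p ≠ ⊤}) : ∃ q : {q // q ∈ A ∧ f q ≠ ⊤},
      q.1 ∈ ekelandSet f A p ∧ ekelandSet f A q ⊆ closedBall q.1 (1 / ((n : ℝ) + 1)) := by
    obtain ⟨q, hq, hball⟩ :=
      exists_ekelandSet_subset_closedBall hb p.2.1 p.2.2 (Nat.one_div_pos_of_nat (n := n))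
    exact ⟨⟨q, hq.1, ((le_of_mem_ekelandSet hq).trans_lt p.2.2.lt_top).ne⟩, hq, hball⟩
  choose next hmem hball using hstep
  let w : ℕ → {p // p ∈ A ∧ f p ≠ ⊤} :=
    fun n => Nat.rec (next 0 ⟨u, hu, hfu⟩) (fun n p => next (n + 1) p) n
  refine ⟨fun n => (w n).1, hmem _ _, fun n => hmem (n + 1) (w n), fun n => ?_⟩
  cases n <;> exact hball _ _

end PseudoMetricSpace

theorem ekeland_variational_principle [MetricSpace X] {f : X → EReal} {A : Set X}
    (hA : IsComplete A) (hf : LowerSemicontinuousOn f A) {b : ℝ}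
    (hb : ∀ z ∈ A, (b : EReal) ≤ f z) {u : X} (hu : u ∈ A) (hfu : f u ≠ ⊤) :
    ∃ y ∈ A, f y + ((dist y u : ℝ) : EReal) ≤ f u ∧
      ∀ z ∈ A, z ≠ y → f y < f z + ((dist z y : ℝ) : EReal) := by
  obtain ⟨w, hw0, hw, hball⟩ := exists_seq_ekelandSet_subset_closedBall hb hu hfu
  have hanti : Antitone fun n => ekelandSet f A (w n) :=
    antitone_nat_of_succ_le fun n => ekelandSet_subset (hw n)
  have hclosed (n : ℕ) : IsClosed (ekelandSet f A (w n)) :=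
    isClosed_ekelandSet hA.isClosed hf (w n)
  have hbdd (n : ℕ) : Bornology.IsBounded (ekelandSet f A (w n)) :=
    isBounded_closedBall.subset (hball n)
  have hdiam : Tendsto (fun n => diam (ekelandSet f A (w n))) atTop (𝓝 0) := by
    refine squeeze_zero (fun _ => diam_nonneg)
      (fun n => diam_le_of_subset_closedBall (by positivity) (hball n)) ?_
    simpa using tendsto_one_div_add_atTop_nhds_zero_nat.const_mul (2 : ℝ)
  have hcomplete : IsComplete (ekelandSet f A (w 0)) :=
    isComplete_of_isClosed_subset hA (hclosed 0) fun _ hz => hz.1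
  have hinter (N : ℕ) : (⋂ n ≤ N, ekelandSet f A (w n)).Nonempty :=
    ⟨w (N + 1), mem_iInter₂.2 fun n hn => hanti hn (hw N)⟩
  obtain ⟨y, hy⟩ := hcomplete.nonempty_iInter_of_nonempty_biInter hclosed hbdd hinter hdiam
  rw [mem_iInter] at hy
  have hyu : y ∈ ekelandSet f A u := ekelandSet_subset hw0 (hy 0)
  refine ⟨y, hyu.1, hyu.2, fun z hzA hzy => ?_⟩
  by_contra! hle
  have hz (n : ℕ) : z ∈ ekelandSet f A (w n) := ekelandSet_subset (hy n) ⟨hzA, hle⟩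
  exact hzy <| dist_le_zero.1 <|
    ge_of_tendsto' hdiam fun n => dist_le_diam_of_mem (hbdd n) (hz n) (hy n)

end Ekeland

section RateOfDescent

variable {X : Type*} [MetricSpace X]

lemma frequently_lt_add_mul_dist_of_rateOfDescent_lt {g : X → EReal} {K : Set X} {x : X} {c : ℝ}
    (hbot : g x ≠ ⊥) (htop : g x ≠ ⊤) (h : rateOfDescent g K x < c) :
    ∃ᶠ y in 𝓝[K \ {x}] x, g y < g x + ((c * dist y x : ℝ) : EReal) := by
  have hne : ∀ᶠ y in 𝓝[K \ {x}] x, y ∈ K \ {x} := self_mem_nhdsWithin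
  refine ((frequently_lt_of_liminf_lt (by isBoundedDefault) h).and_eventually hne).mono ?_
  rintro y ⟨hy, -, hyx⟩
  have hpos : (0 : EReal) < ((dist y x : ℝ) : EReal) := EReal.coe_pos.2 (dist_pos.2 hyx)
  rw [EReal.coe_inv, ← div_eq_mul_inv, EReal.div_lt_iff hpos (EReal.coe_ne_top _),
    ← EReal.coe_mul] at hy
  rw [add_comm]
  exact (EReal.sub_lt_iff (.inl hbot) (.inl htop)).1 hy

end RateOfDescent

section Calm

variable {X : Type*} [PseudoMetricSpace X]

lemma eventually_le_add_mul_dist_of_lipschitzOnWith {I : X → EReal} {V : Set X} {x : X} {L : ℝ≥0}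
    (hV : V ∈ 𝓝 x) (hbot : I x ≠ ⊥) (htop : ∀ y ∈ V, I y ≠ ⊤)
    (hL : LipschitzOnWith L (fun y => (I y).toReal) V) :
    ∀ᶠ y in 𝓝 x, I y ≤ I x + ((L * dist y x : ℝ) : EReal) := by
  have hxV : x ∈ V := mem_of_mem_nhds hV
  filter_upwards [hV] with y hyV
  calc I y ≤ ((I y).toReal : EReal) := EReal.le_coe_toReal (htop y hyV)
    _ ≤ (((I x).toReal + L * dist y x : ℝ) : EReal) :=
        EReal.coe_le_coe_iff.2 (hL.le_add_mul hyV hxV)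
    _ = I x + ((L * dist y x : ℝ) : EReal) := by
        rw [EReal.coe_add, EReal.coe_toReal (htop x hxV) hbot]

end Calm

section Penalty

variable {X : Type*} {I : X → EReal} {φ : X → ℝ≥0∞} {M A : Set X} {x : X}

/-- The penalty function `Φ_λ = I + λφ`. -/
noncomputable def penalty (I : X → EReal) (φ : X → ℝ≥0∞) (lam : ℝ) (x : X) : EReal :=
  I x + (lam : EReal) * (φ x : EReal)

/-- The set of global minimizers of `f` on `s`. -/
def minimizersOn (f : X → EReal) (s : Set X) : Set X :=
  {x | x ∈ s ∧ ∀ y ∈ s, f x ≤ f y}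

/-- Global exactness of the penalty function `Φ_λ` for the minimization of `I` over `M ∩ A`: for
all large `λ`, minimizing `Φ_λ` over `A` has the same solutions. -/
def IsGloballyExact (I : X → EReal) (φ : X → ℝ≥0∞) (M A : Set X) : Prop :=
  ∃ lamStar : ℝ, 0 ≤ lamStar ∧ ∀ lam : ℝ, lamStar ≤ lam →
    minimizersOn (penalty I φ lam) A = minimizersOn I (M ∩ A)

/-- The set `{x ∈ Ω_δ : Φ_λ(x) < c}`, where `Ω_δ = {x ∈ A : φ(x) < δ}`; the set `C(δ, λ₀)` is the
case `λ = λ₀`, `c = I(x₀)`. -/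
def penaltySublevel (I : X → EReal) (φ : X → ℝ≥0∞) (A : Set X) (δ lam : ℝ) (c : EReal) : Set X :=
  {x | x ∈ A ∧ φ x < ENNReal.ofReal δ ∧ penalty I φ lam x < c}

lemma penalty_of_eq_zero (lam : ℝ) (hx : φ x = 0) : penalty I φ lam x = I x := by
  simp [penalty, hx]

lemma penalty_mono : Monotone fun lam => penalty I φ lam x := by
  intro lam μ h
  exact add_le_add le_rfl (mul_le_mul_of_nonneg_right (EReal.coe_le_coe_iff.2 h)
    (EReal.coe_ennreal_nonneg (φ x)))

lemma le_penalty_of_nonneg {lam : ℝ} (hlam : 0 ≤ lam) : I x ≤ penalty I φ lam x :=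
  le_add_of_nonneg_right (mul_nonneg (EReal.coe_nonneg.2 hlam) (EReal.coe_ennreal_nonneg _))

lemma lowerSemicontinuousOn_penalty [TopologicalSpace X] (hI : LowerSemicontinuousOn I A)
    (hφ : LowerSemicontinuousOn φ A) {lam : ℝ} (hlam : 0 ≤ lam) :
    LowerSemicontinuousOn (penalty I φ lam) A := by
  have hcont : Continuous fun t : ℝ≥0∞ => ((ENNReal.ofReal lam * t : ℝ≥0∞) : EReal) :=
    continuous_coe_ennreal_ereal.comp (ENNReal.continuous_const_mul ENNReal.ofReal_ne_top)
  have hmono : Monotone fun t : ℝ≥0∞ => ((ENNReal.ofReal lam * t : ℝ≥0∞) : EReal) :=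
    fun s t hst => EReal.coe_ennreal_le_coe_ennreal_iff.2 (by gcongr)
  convert lowerSemicontinuousOn_ereal_add hI (hcont.comp_lowerSemicontinuousOn hφ hmono) using 2
  simp [penalty, EReal.coe_ennreal_mul, EReal.coe_ennreal_ofReal, hlam]

lemma le_ofReal_div_of_le_penalty_of_penalty_le {b m μ lam : ℝ} (hμ : μ < lam)
    (hb : (b : EReal) ≤ penalty I φ μ x) (hm : penalty I φ lam x ≤ m) :
    φ x ≤ ENNReal.ofReal ((m - b) / (lam - μ)) := by
  simp only [penalty] at hb hm
  generalize I x = i at hb hm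
  generalize φ x = p at hb hm ⊢
  have hi : i ≠ ⊥ := by
    rintro rfl
    simp at hb
  induction p using ENNReal.recTopCoe with
  | top =>
    have hμ0 : 0 ≤ μ := by
      by_contra! hneg
      simp [EReal.coe_mul_top_of_neg hneg] at hb
    simp [EReal.coe_mul_top_of_pos (hμ0.trans_lt hμ), EReal.add_top_of_ne_bot hi] at hm
  | coe q =>
    rw [EReal.coe_nnreal_eq_coe_real, ← EReal.coe_mul] at hb hm
    have hi' : i ≠ ⊤ := by
      rintro rfl
      exact EReal.coe_ne_top m (top_le_iff.1 (EReal.top_add_coe _ ▸ hm))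
    lift i to ℝ using ⟨hi', hi⟩ with r
    have hb' : b ≤ r + μ * q := by exact_mod_cast hb
    have hm' : r + lam * q ≤ m := by exact_mod_cast hm
    rw [← ENNReal.ofReal_coe_nnreal]
    refine ENNReal.ofReal_le_ofReal ((le_div_iff₀ (sub_pos.2 hμ)).2 ?_)
    linarith

lemma eq_zero_of_le_penalty_of_penalty_le {m μ lam : ℝ} (hμ : μ < lam)
    (h : (m : EReal) ≤ penalty I φ μ x) (h' : penalty I φ lam x ≤ m) : φ x = 0 := by
  simpa using le_ofReal_div_of_le_penalty_of_penalty_le hμ h h'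

lemma minimizersOn_penalty_eq (hφM : ∀ y ∈ A, φ y = 0 ↔ y ∈ M) {xs : X}
    (hxs : xs ∈ minimizersOn I (M ∩ A)) {m : ℝ} (hm : I xs = m) {μ lam : ℝ} (hμ : μ < lam)
    (h : ∀ y ∈ A, (m : EReal) ≤ penalty I φ μ y) :
    minimizersOn (penalty I φ lam) A = minimizersOn I (M ∩ A) := by
  have hfeas {y : X} (hy : y ∈ M ∩ A) : penalty I φ lam y = I y :=
    penalty_of_eq_zero lam ((hφM y hy.2).2 hy.1)
  ext x
  constructor
  · rintro ⟨hxA, hxmin⟩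
    have hle : penalty I φ lam x ≤ I xs := hfeas hxs.1 ▸ hxmin xs hxs.1.2
    have hxM : x ∈ M :=
      (hφM x hxA).1 (eq_zero_of_le_penalty_of_penalty_le hμ (h x hxA) (hm ▸ hle))
    exact ⟨⟨hxM, hxA⟩, fun y hy => (hfeas ⟨hxM, hxA⟩ ▸ hle).trans (hxs.2 y hy)⟩
  · rintro ⟨hx, hxmin⟩
    refine ⟨hx.2, fun y hy => ?_⟩
    calc penalty I φ lam x = I x := hfeas hx
      _ ≤ I xs := hxmin xs hxs.1
      _ ≤ penalty I φ μ y := hm ▸ h y hy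
      _ ≤ penalty I φ lam y := penalty_mono hμ.le

end Penalty

section LowerBound

variable {X : Type*} [MetricSpace X] {I : X → EReal} {φ : X → ℝ≥0∞} {M A : Set X}

lemma exists_penalty_add_dist_le {x : X} {L a lam : ℝ} (hφx : φ x ≠ ∞)
    (hI : ∀ᶠ y in 𝓝[A] x, I y ≤ I x + ((L * dist y x : ℝ) : EReal))
    (hdesc : rateOfDescent (fun y => (φ y : EReal)) A x ≤ ((-a : ℝ) : EReal))
    (hlam : 0 < lam) (hL : L + 1 < lam * a) :
    ∃ y ∈ A, y ≠ x ∧ penalty I φ lam y + ((dist y x : ℝ) : EReal) ≤ penalty I φ lam x := by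
  obtain ⟨c, hac, hcL⟩ : ∃ c, -a < c ∧ lam * c = -(L + 1) :=
    ⟨-(L + 1) / lam, by rw [lt_div_iff₀ hlam]; linarith, by field_simp⟩
  have hfreq := frequently_lt_add_mul_dist_of_rateOfDescent_lt
    (g := fun y => (φ y : EReal)) (EReal.coe_ennreal_ne_bot (φ x))
    (EReal.coe_ennreal_eq_top_iff.not.2 hφx) (hdesc.trans_lt (EReal.coe_lt_coe_iff.2 hac))
  have hmem : ∀ᶠ y in 𝓝[A \ {x}] x, y ∈ A \ {x} := self_mem_nhdsWithin
  obtain ⟨y, hφy, hIy, hyA, hyx⟩ :=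
    (hfreq.and_eventually ((hI.filter_mono (nhdsWithin_mono x sdiff_subset)).and hmem)).exists
  refine ⟨y, hyA, hyx, ?_⟩
  lift φ x to ℝ≥0 using hφx with q hq
  calc penalty I φ lam y + ((dist y x : ℝ) : EReal)
      ≤ I x + ((L * dist y x : ℝ) : EReal)
          + lam * (((q : ℝ) : EReal) + ((c * dist y x : ℝ) : EReal))
          + ((dist y x : ℝ) : EReal) := by
        exact add_le_add
          (add_le_add hIy (mul_le_mul_of_nonneg_left hφy.le (EReal.coe_nonneg.2 hlam.le))) le_rfl
    _ = I x + ((L * dist y x + lam * (q + c * dist y x) + dist y x : ℝ) : EReal) := by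
        push_cast
        simp only [add_assoc]
    _ = penalty I φ lam x := by
        have hslope : L * dist y x + lam * (q + c * dist y x) + dist y x = lam * q := by
          linear_combination dist y x * hcL
        rw [hslope, penalty, ← hq, EReal.coe_mul, EReal.coe_nnreal_eq_coe_real]

theorem eventually_forall_le_penalty (hA : IsComplete A) (hIlsc : LowerSemicontinuousOn I A)
    (hφlsc : LowerSemicontinuousOn φ A) {m b μ lam₀ δ L a : ℝ} (hδ : 0 < δ) (ha : 0 < a)
    (hm : ∀ y ∈ M ∩ A, (m : EReal) ≤ I y) (hb : ∀ y ∈ A, (b : EReal) ≤ penalty I φ μ y)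
    (hcalm : ∀ x ∈ penaltySublevel I φ A δ lam₀ m \ M,
      ∀ᶠ y in 𝓝[A] x, I y ≤ I x + ((L * dist y x : ℝ) : EReal))
    (hdesc : ∀ x ∈ penaltySublevel I φ A δ lam₀ m \ M,
      rateOfDescent (fun y => (φ y : EReal)) A x ≤ ((-a : ℝ) : EReal)) :
    ∀ᶠ lam : ℝ in atTop, ∀ x ∈ A, (m : EReal) ≤ penalty I φ lam x := by
  have hsmall : ∀ᶠ lam : ℝ in atTop, (m - b) / (lam - μ) < δ :=
    ((tendsto_atTop_add_const_right _ (-μ) tendsto_id).const_div_atTop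
      (m - b)).eventually_lt_const hδ
  have hlarge : ∀ᶠ lam : ℝ in atTop, L + 1 < lam * a :=
    (tendsto_id.atTop_mul_const ha).eventually_gt_atTop (L + 1)
  filter_upwards [eventually_gt_atTop 0, eventually_ge_atTop lam₀, eventually_gt_atTop μ,
    hsmall, hlarge] with lam hpos hlam₀ hμ hsmall hlarge x hx
  by_contra! hlt
  obtain ⟨y, hyA, hyx, hymin⟩ := ekeland_variational_principle hA
    (lowerSemicontinuousOn_penalty hIlsc hφlsc hpos.le)
    (fun z hz => (hb z hz).trans (penalty_mono hμ.le)) hx hlt.ne_top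
  have hym : penalty I φ lam y < m :=
    ((le_add_of_nonneg_right (EReal.coe_nonneg.2 dist_nonneg)).trans hyx).trans_lt hlt
  have hφy : φ y < ENNReal.ofReal δ :=
    (le_ofReal_div_of_le_penalty_of_penalty_le hμ (hb y hyA) hym.le).trans_lt
      ((ENNReal.ofReal_lt_ofReal_iff hδ).2 hsmall)
  have hyC : y ∈ penaltySublevel I φ A δ lam₀ m :=
    ⟨hyA, hφy, (penalty_mono hlam₀).trans_lt hym⟩
  have hyM : y ∉ M := fun hyM =>
    ((hm y ⟨hyM, hyA⟩).trans (le_penalty_of_nonneg hpos.le)).not_gt hym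
  obtain ⟨z, hzA, hzy, hz⟩ := exists_penalty_add_dist_le hφy.ne_top (hcalm y ⟨hyC, hyM⟩)
    (hdesc y ⟨hyC, hyM⟩) hpos hlarge
  exact (hymin z hzA hzy).not_ge hz

end LowerBound

theorem exact_penalty_globally_exact_iff_bounded_below_general {X : Type*} [MetricSpace X]
    {M A : Set X} (hA : IsComplete A) {I : X → EReal} {φ : X → ℝ≥0∞}
    (hφM : ∀ x ∈ A, φ x = 0 ↔ x ∈ M)
    (hIlsc : LowerSemicontinuousOn I A) (hφlsc : LowerSemicontinuousOn φ A)
    {xs : X} (hxs : xs ∈ minimizersOn I (M ∩ A)) {m : ℝ} (hm : I xs = m)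
    {lam₀ δ L a : ℝ} (hδ : 0 < δ) (ha : 0 < a)
    (hcalm : ∀ x ∈ penaltySublevel I φ A δ lam₀ m \ M,
      ∀ᶠ y in 𝓝[A] x, I y ≤ I x + ((L * dist y x : ℝ) : EReal))
    (hdesc : ∀ x ∈ penaltySublevel I φ A δ lam₀ m \ M,
      rateOfDescent (fun y => (φ y : EReal)) A x ≤ ((-a : ℝ) : EReal)) :
    IsGloballyExact I φ M A ↔
      ∃ lam : ℝ, 0 ≤ lam ∧ ∃ b : ℝ, ∀ x ∈ A, (b : EReal) ≤ penalty I φ lam x := by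
  constructor
  · rintro ⟨lam, hlam, hexact⟩
    have hxsmin : xs ∈ minimizersOn (penalty I φ lam) A := hexact lam le_rfl ▸ hxs
    refine ⟨lam, hlam, m, fun x hx => ?_⟩
    rw [← hm, ← penalty_of_eq_zero (I := I) lam ((hφM xs hxs.1.2).2 hxs.1.1)]
    exact hxsmin.2 x hx
  · rintro ⟨μ, -, b, hb⟩
    obtain ⟨μ', hμ'0, hμ'⟩ := ((eventually_ge_atTop 0).and <|
      eventually_forall_le_penalty hA hIlsc hφlsc hδ ha (hm ▸ hxs.2) hb hcalm hdesc).exists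
    exact ⟨μ' + 1, by linarith,
      fun lam hlam => minimizersOn_penalty_eq hφM hxs hm (by linarith) hμ'⟩

/-- Theorem 2.1 ("global exactness").  Under the stated assumptions, the penalty function
`Φ_λ = I + λφ` is globally exact (its global minimisers over `A` coincide with the global
minimisers of `I` over `Ω = M ∩ A` for all sufficiently large `λ`) if and only if `Φ_λ` is
bounded below on `A` for some `λ ≥ 0`. -/
theorem exact_penalty_globally_exact_iff_bounded_below
    {X : Type*} [MetricSpace X] [CompleteSpace X]
    (M A : Set X) (hA : IsClosed A)
    (I : X → EReal) (hInotbot : ∀ x, I x ≠ ⊥)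
    (φ : X → ℝ≥0∞) (hφM : ∀ x, φ x = 0 ↔ x ∈ M)
    (Φ : ℝ → X → EReal)
    (hΦdef : ∀ lam x, Φ lam x = I x + (lam : EReal) * ((φ x : ℝ≥0∞) : EReal))
    (hIlsc : LowerSemicontinuous I) (hφlsc : LowerSemicontinuous φ)
    -- the problem (P) has a globally optimal solution with finite optimal value
    (xs : X) (hxs : xs ∈ M ∩ A) (hxsmin : ∀ y ∈ M ∩ A, I xs ≤ I y) (hxsfin : I xs ≠ ⊤)
    -- a feasible point x₀ and parameters λ₀ > 0, δ > 0
    (x₀ : X) (hx₀ : x₀ ∈ M ∩ A)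
    (lam₀ δ : ℝ) (hlam₀ : 0 < lam₀) (hδ : 0 < δ)
    -- (i) `I` is Lipschitz continuous on an open set containing `C(δ, λ₀)`
    (hLip : ∃ (V : Set X) (L : ℝ≥0), IsOpen V ∧
      {x | x ∈ A ∧ φ x < ENNReal.ofReal δ ∧ Φ lam₀ x < I x₀} ⊆ V ∧
      (∀ x ∈ V, I x ≠ ⊤) ∧ LipschitzOnWith L (fun x => (I x).toReal) V)
    -- (ii) the rate of steepest descent of `φ` w.r.t. `A` is ≤ −a < 0 on `C(δ, λ₀) \ Ω`
    (hdesc : ∃ a : ℝ, 0 < a ∧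
      ∀ x ∈ {x | x ∈ A ∧ φ x < ENNReal.ofReal δ ∧ Φ lam₀ x < I x₀} \ (M ∩ A),
        rateOfDescent (fun y => ((φ y : ℝ≥0∞) : EReal)) A x ≤ ((-a : ℝ) : EReal)) :
    (∃ lamStar : ℝ, 0 ≤ lamStar ∧ ∀ lam : ℝ, lamStar ≤ lam →
        {x | x ∈ A ∧ ∀ y ∈ A, Φ lam x ≤ Φ lam y}
          = {x | x ∈ M ∩ A ∧ ∀ y ∈ M ∩ A, I x ≤ I y}) ↔
      (∃ lam : ℝ, 0 ≤ lam ∧ ∃ b : ℝ, ∀ x ∈ A, ((b : ℝ) : EReal) ≤ Φ lam x) := by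
  obtain rfl : Φ = penalty I φ := funext₂ hΦdef
  obtain ⟨V, L, hVo, hCV, hVtop, hL⟩ := hLip
  obtain ⟨a, ha, hdesc⟩ := hdesc
  have hm := (EReal.coe_toReal hxsfin (hInotbot xs)).symm
  have hC {x : X} (hx : x ∈ penaltySublevel I φ A δ lam₀ (I xs).toReal) :
      x ∈ penaltySublevel I φ A δ lam₀ (I x₀) :=
    ⟨hx.1, hx.2.1, hx.2.2.trans_le (hm ▸ hxsmin x₀ hx₀)⟩
  exact exact_penalty_globally_exact_iff_bounded_below_general hA.isComplete (fun x _ => hφM x)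
    (hIlsc.lowerSemicontinuousOn A) (hφlsc.lowerSemicontinuousOn A) ⟨hxs, hxsmin⟩ hm hδ ha
    (fun x hx => (eventually_le_add_mul_dist_of_lipschitzOnWith (hVo.mem_nhds (hCV (hC hx.1)))
      (hInotbot x) hVtop hL).filter_mono nhdsWithin_le_nhds)
    fun x hx => hdesc x ⟨hC hx.1, fun hxΩ => hx.2 hxΩ.1⟩
end

section
/- Suppose X is complete, A is closed, I and φ are lower semicontinuous on A, φ is continuous at every point of Ω, and there exist c > I*, λ₀ > 0 and δ > 0 such that (i) I is Lipschitz continuous on an open set containing S_{λ₀}(c) ∩ Ω_δ, (ii) there exists a > 0 such that φ↓_A(x) ≤ −a for all x ∈ S_{λ₀}(c) ∩ (Ω_δ \ Ω), and (iii) Φ_{λ₀} is bounded below on A. Then there exists λ* ≥ 0 such that for every λ ≥ λ*: inf_{x∈A} Φ_λ(x) = I*, and the set of global minimizers of Φ_λ on A coincides with the set of global minimizers of I on Ω. -/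
open Filter Metric Set Topology
open scoped ENNReal NNReal

/-
Take `λ` so large that `{Φ_λ < c}` lies in `S_{λ₀}(c) ∩ Ω_δ`, which is possible because `Φ_{λ₀}` is
bounded below, and that `λ a / 2 ≥ L + 1`, where `L` is the Lipschitz constant of `I`. Then at every
infeasible point of `{Φ_λ < c}` the decrease of `λ φ` along a descent direction of `φ` outweighs the
growth of `I`, so that `Φ_λ` can be lowered at a rate of at least `1`. By Ekeland's variational
principle, below any point of `A` where `Φ_λ < I*` there is another one from which no descent at
rate `1` is possible; it is feasible, hence its value is at least `I*`, a contradiction. Likewise a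
global minimiser of `Φ_λ` on `A` admits no descent and is therefore feasible.
-/

lemma exists_mem_forall_le_add {α : Type*} {f : α → EReal} {s : Set α} (hs : s.Nonempty) {b : ℝ}
    (hb : ∀ x ∈ s, (b : EReal) ≤ f x) {η : ℝ} (hη : 0 < η) : ∃ y ∈ s, ∀ z ∈ s, f y ≤ f z + η := by
  by_cases htop : ⨅ z ∈ s, f z = ⊤
  · obtain ⟨y, hy⟩ := hs
    refine ⟨y, hy, fun z hz => ?_⟩
    rw [iInf₂_eq_top.1 htop z hz, EReal.top_add_coe]
    exact le_top
  · have hbot : ⨅ z ∈ s, f z ≠ ⊥ :=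
      ne_bot_of_le_ne_bot (EReal.coe_ne_bot b) (le_iInf₂ hb)
    have hlt : ⨅ z ∈ s, f z < (⨅ z ∈ s, f z) + (η : EReal) := by
      lift ⨅ z ∈ s, f z to ℝ using ⟨htop, hbot⟩ with r
      exact_mod_cast lt_add_of_pos_right r hη
    obtain ⟨y, hylt⟩ := iInf_lt_iff.1 hlt
    obtain ⟨hy, hylt⟩ := iInf_lt_iff.1 hylt
    exact ⟨y, hy, fun z hz => hylt.le.trans (by gcongr; exact iInf₂_le z hz)⟩

section DescentSet

variable {X : Type*} [PseudoMetricSpace X] {f : X → EReal} {K : Set X} {ε : ℝ} {x y : X}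

/-- The points of `K` that improve on `x` in the sense of Ekeland's variational principle: the value
of `f` drops by at least `ε` times the distance travelled. -/
def descentSet (f : X → EReal) (K : Set X) (ε : ℝ) (x : X) : Set X :=
  {y ∈ K | f y + ((ε * dist x y : ℝ) : EReal) ≤ f x}

lemma mem_descentSet_self (hx : x ∈ K) : x ∈ descentSet f K ε x :=
  ⟨hx, by simp⟩

lemma le_of_mem_descentSet (hε : 0 ≤ ε) (hy : y ∈ descentSet f K ε x) : f y ≤ f x :=
  (le_add_of_nonneg_right (by positivity)).trans hy.2

lemma descentSet_subset_descentSet (hε : 0 ≤ ε) (hy : y ∈ descentSet f K ε x) :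
    descentSet f K ε y ⊆ descentSet f K ε x := by
  rintro z ⟨hzK, hz⟩
  refine ⟨hzK, ?_⟩
  calc f z + ((ε * dist x z : ℝ) : EReal)
      ≤ f z + ((ε * dist y z + ε * dist x y : ℝ) : EReal) := by
        gcongr
        rw [← mul_add, add_comm]
        gcongr
        exact dist_triangle x y z
    _ = f z + ((ε * dist y z : ℝ) : EReal) + ((ε * dist x y : ℝ) : EReal) := by
        rw [EReal.coe_add, add_assoc]
    _ ≤ f y + ((ε * dist x y : ℝ) : EReal) := by gcongr
    _ ≤ f x := hy.2

lemma isClosed_descentSet (hK : IsClosed K) (hf : LowerSemicontinuousOn f K) :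
    IsClosed (descentSet f K ε x) := by
  have hdist : Continuous fun y => ((ε * dist x y : ℝ) : EReal) :=
    continuous_coe_real_ereal.comp (by fun_prop)
  have hsum := hf.add' (hdist.lowerSemicontinuous.lowerSemicontinuousOn K) fun y _ =>
    EReal.continuousAt_add (.inr (EReal.coe_ne_bot _)) (.inr (EReal.coe_ne_top _))
  obtain ⟨v, hv, hKv⟩ := lowerSemicontinuousOn_iff_preimage_Iic.1 hsum (f x)
  exact (show descentSet f K ε x = K ∩ v from hKv) ▸ hK.inter hv

lemma exists_mem_descentSet_forall_dist_le (hε : 0 < ε) {b : ℝ}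
    (hb : ∀ x ∈ K, (b : EReal) ≤ f x) (hx : x ∈ K) (hfx : f x ≠ ⊤) {η : ℝ} (hη : 0 < η) :
    ∃ y ∈ descentSet f K ε x, ∀ z ∈ descentSet f K ε y, dist y z ≤ η := by
  obtain ⟨y, hy, hmin⟩ := exists_mem_forall_le_add ⟨x, mem_descentSet_self (ε := ε) hx⟩
    (fun z hz => hb z hz.1) (mul_pos hε hη)
  refine ⟨y, hy, fun z hz => ?_⟩
  have hzx : z ∈ descentSet f K ε x := descentSet_subset_descentSet hε.le hy hz
  have htop : f z ≠ ⊤ := ne_top_of_le_ne_top hfx (le_of_mem_descentSet hε.le hzx)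
  have hbot : f z ≠ ⊥ := ne_bot_of_le_ne_bot (EReal.coe_ne_bot b) (hb z hz.1)
  have hle := hz.2.trans (hmin z hzx)
  lift f z to ℝ using ⟨htop, hbot⟩ with r
  norm_cast at hle
  exact le_of_mul_le_mul_left (by linarith) hε

lemma exists_seq_descentSet_antitone (hε : 0 < ε) {b : ℝ} (hb : ∀ x ∈ K, (b : EReal) ≤ f x)
    (hx : x ∈ K) (hfx : f x ≠ ⊤) :
    ∃ u : ℕ → X, (∀ n, u n ∈ descentSet f K ε x) ∧ Antitone (fun n => descentSet f K ε (u n)) ∧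
      ∀ n, ∀ z ∈ descentSet f K ε (u n), dist (u n) z ≤ (1 / 2) ^ n := by
  have hstep : ∀ (y : descentSet f K ε x) (n : ℕ), ∃ z : descentSet f K ε x,
      (z : X) ∈ descentSet f K ε y ∧ ∀ w ∈ descentSet f K ε z, dist (z : X) w ≤ (1 / 2) ^ n := by
    rintro ⟨y, hy⟩ n
    have hfy : f y ≠ ⊤ := ne_top_of_le_ne_top hfx (le_of_mem_descentSet hε.le hy)
    obtain ⟨z, hz, hzdist⟩ := exists_mem_descentSet_forall_dist_le hε hb hy.1 hfy
      (show (0 : ℝ) < (1 / 2) ^ n by positivity)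
    exact ⟨⟨z, descentSet_subset_descentSet hε.le hy hz⟩, hz, hzdist⟩
  choose next hnext hdist using hstep
  let u : ℕ → descentSet f K ε x := Nat.rec ⟨x, mem_descentSet_self hx⟩ fun n y => next y n
  exact ⟨fun n => u (n + 1), fun n => (u (n + 1)).2,
    antitone_nat_of_succ_le fun n => descentSet_subset_descentSet hε.le (hnext (u (n + 1)) (n + 1)),
    fun n => hdist (u n) n⟩

end DescentSet

section Ekeland

variable {X : Type*} [MetricSpace X] {f : X → EReal} {K : Set X} {ε : ℝ} {x : X}

theorem ekeland_variational_principle_s1 (hK : IsComplete K) (hf : LowerSemicontinuousOn f K)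
    (hε : 0 < ε) {b : ℝ} (hb : ∀ x ∈ K, (b : EReal) ≤ f x) (hx : x ∈ K) (hfx : f x ≠ ⊤) :
    ∃ y ∈ descentSet f K ε x, descentSet f K ε y ⊆ {y} := by
  obtain ⟨u, hux, hanti, hdist⟩ := exists_seq_descentSet_antitone hε hb hx hfx
  have hmem : ∀ {n m}, n ≤ m → u m ∈ descentSet f K ε (u n) := fun {_ m} hnm =>
    hanti hnm (mem_descentSet_self (hux m).1)
  have hpow : Tendsto (fun n : ℕ => (1 / 2 : ℝ) ^ n) atTop (𝓝 0) :=
    tendsto_pow_atTop_nhds_zero_of_lt_one (by norm_num) (by norm_num)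
  obtain ⟨y, -, hy⟩ := cauchySeq_tendsto_of_isComplete hK (fun n => (hux n).1)
    (cauchySeq_of_le_tendsto_0' _ (fun n m hnm => hdist n _ (hmem hnm)) hpow)
  have hyu : ∀ n, y ∈ descentSet f K ε (u n) := fun n =>
    (isClosed_descentSet hK.isClosed hf).mem_of_tendsto hy
      ((eventually_ge_atTop n).mono fun _ => hmem)
  refine ⟨y, descentSet_subset_descentSet hε.le (hux 0) (hyu 0), fun z hz => ?_⟩
  have hz_lim : Tendsto u atTop (𝓝 z) :=
    tendsto_iff_dist_tendsto_zero.2 <| squeeze_zero (fun _ => dist_nonneg)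
      (fun n => hdist n z (descentSet_subset_descentSet hε.le (hyu n) hz)) hpow
  exact tendsto_nhds_unique hz_lim hy

lemma descentSet_subset_singleton_of_forall_le (hε : 0 < ε) (hbot : f x ≠ ⊥) (htop : f x ≠ ⊤)
    (hmin : ∀ y ∈ K, f x ≤ f y) : descentSet f K ε x ⊆ {x} := by
  rintro y ⟨hyK, hy⟩
  have hle : f x + ((ε * dist x y : ℝ) : EReal) ≤ f x := by
    refine le_trans ?_ hy
    gcongr
    exact hmin y hyK
  lift f x to ℝ using ⟨htop, hbot⟩ with r
  norm_cast at hle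
  have hdist : dist x y ≤ 0 := nonpos_of_mul_nonpos_right (by linarith) hε
  exact (dist_le_zero.1 hdist).symm

end Ekeland

section Exactness

variable {X : Type*} [MetricSpace X] {f : X → EReal} {A M : Set X} {c : EReal} {ε : ℝ}

theorem biInf_eq_biInf_inter_of_descentSet (hA : IsComplete A) (hf : LowerSemicontinuousOn f A)
    {b : ℝ} (hb : ∀ x ∈ A, (b : EReal) ≤ f x) (hε : 0 < ε) (hc : ⨅ x ∈ M ∩ A, f x < c)
    (hM : ∀ x ∈ A, f x < c → descentSet f A ε x ⊆ {x} → x ∈ M) :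
    ⨅ x ∈ A, f x = ⨅ x ∈ M ∩ A, f x := by
  refine le_antisymm (biInf_mono fun _ hx => hx.2) (le_iInf₂ fun x hx => ?_)
  by_contra! hlt
  obtain ⟨y, hy, hycrit⟩ := ekeland_variational_principle_s1 hA hf hε hb hx hlt.ne_top
  have hylt : f y < ⨅ x ∈ M ∩ A, f x := (le_of_mem_descentSet hε.le hy).trans_lt hlt
  have hyM : y ∈ M := hM y hy.1 (hylt.trans hc) hycrit
  exact hylt.not_ge (iInf₂_le y ⟨hyM, hy.1⟩)

theorem setOf_forall_le_eq_inter_of_descentSet (hbot : ∀ x ∈ A, f x ≠ ⊥)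
    (hε : 0 < ε) (hc : ⨅ x ∈ M ∩ A, f x < c)
    (hM : ∀ x ∈ A, f x < c → descentSet f A ε x ⊆ {x} → x ∈ M)
    (hinf : ⨅ x ∈ A, f x = ⨅ x ∈ M ∩ A, f x) :
    {x | x ∈ A ∧ ∀ y ∈ A, f x ≤ f y} = {x | x ∈ M ∩ A ∧ ∀ y ∈ M ∩ A, f x ≤ f y} := by
  ext x
  constructor
  · rintro ⟨hxA, hx⟩
    have hxc : f x < c := (le_iInf₂ hx).trans_lt (hinf ▸ hc)
    have hxM : x ∈ M :=
      hM x hxA hxc (descentSet_subset_singleton_of_forall_le hε (hbot x hxA) hxc.ne_top hx)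
    exact ⟨⟨hxM, hxA⟩, fun y hy => hx y hy.2⟩
  · rintro ⟨hxΩ, hx⟩
    exact ⟨hxΩ.2, fun y hy => (le_iInf₂ hx).trans (hinf ▸ iInf₂_le y hy)⟩

end Exactness

lemma frequently_le_add_mul_dist_of_rateOfDescent_lt {X : Type*} [MetricSpace X]
    {g : X → EReal} {K : Set X} {x : X} (hbot : g x ≠ ⊥) (htop : g x ≠ ⊤) {t : ℝ}
    (h : rateOfDescent g K x < t) :
    ∃ᶠ y in 𝓝[K \ {x}] x, g y ≤ g x + ((t * dist x y : ℝ) : EReal) := by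
  have hfreq := (frequently_lt_of_liminf_lt (by isBoundedDefault) h).and_eventually
    self_mem_nhdsWithin
  refine hfreq.mono fun y ⟨hy, _, hyx⟩ => ?_
  have hpos : (0 : EReal) < (dist y x : ℝ) := by exact_mod_cast dist_pos.2 hyx
  rw [mul_comm, EReal.coe_inv, ← EReal.div_eq_inv_mul] at hy
  have hle := (EReal.div_le_iff_le_mul hpos (EReal.coe_ne_top _)).1 hy.le
  rw [EReal.sub_le_iff_le_add (.inl hbot) (.inl htop), add_comm] at hle
  rwa [mul_comm t, dist_comm, EReal.coe_mul]

lemma eventually_le_add_mul_dist_of_lipschitzOnWith_toReal {X : Type*} [PseudoMetricSpace X]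
    {I : X → EReal} {V : Set X} {L : ℝ≥0} {x : X}
    (hbot : I x ≠ ⊥) (htop : ∀ y ∈ V, I y ≠ ⊤)
    (hL : LipschitzOnWith L (fun y => (I y).toReal) V) (hV : V ∈ 𝓝 x) :
    ∀ᶠ y in 𝓝 x, I y ≤ I x + ((L * dist x y : ℝ) : EReal) := by
  filter_upwards [hV] with y hy
  have hx : x ∈ V := mem_of_mem_nhds hV
  have hle : (I y).toReal ≤ (I x).toReal + L * dist x y := by
    rw [dist_comm]
    exact hL.le_add_mul hy hx
  calc I y ≤ ((I y).toReal : EReal) := EReal.le_coe_toReal (htop y hy)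
    _ ≤ (((I x).toReal + L * dist x y : ℝ) : EReal) := by exact_mod_cast hle
    _ = I x + ((L * dist x y : ℝ) : EReal) := by
        rw [EReal.coe_add, EReal.coe_toReal (htop x hx) hbot]

section Penalty

variable {X : Type*} {I : X → EReal} {φ : X → ℝ≥0∞} {x : X}

/-- The penalty function `Φ_λ = I + λ φ`, whose minimisation over `A` replaces that of `I` over
`M ∩ A`. The product is taken in `EReal`, where `0 * ⊤ = 0`, so that `Φ_0 = I`. -/
noncomputable def penaltyFunction (I : X → EReal) (φ : X → ℝ≥0∞) (lam : ℝ) (x : X) : EReal :=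
  I x + (lam : EReal) * (φ x : EReal)

lemma penaltyFunction_of_eq_zero (hx : φ x = 0) (lam : ℝ) : penaltyFunction I φ lam x = I x := by
  simp [penaltyFunction, hx]

lemma penaltyFunction_add {s t : ℝ} (hs : 0 ≤ s) (ht : 0 ≤ t) :
    penaltyFunction I φ (s + t) x = penaltyFunction I φ s x + (t : EReal) * (φ x : EReal) := by
  rw [penaltyFunction, penaltyFunction, EReal.coe_add,
    EReal.right_distrib_of_nonneg (by exact_mod_cast hs) (by exact_mod_cast ht), add_assoc]

lemma penaltyFunction_mono {s t : ℝ} (hst : s ≤ t) :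
    penaltyFunction I φ s x ≤ penaltyFunction I φ t x := by
  unfold penaltyFunction
  gcongr

lemma lt_ofReal_of_penaltyFunction_lt {lam₀ lam b c δ : ℝ} (hlam₀ : 0 ≤ lam₀) (hlam : lam₀ ≤ lam)
    (hb : (b : EReal) ≤ penaltyFunction I φ lam₀ x) (hδ : c ≤ b + (lam - lam₀) * δ)
    (hx : penaltyFunction I φ lam x < c) : φ x < ENNReal.ofReal δ := by
  by_contra! hφ
  refine hx.not_ge ?_
  have hφ' : (δ : EReal) ≤ φ x := by
    refine le_trans ?_ (EReal.coe_ennreal_le_coe_ennreal_iff.2 hφ)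
    rw [EReal.coe_ennreal_ofReal]
    exact_mod_cast le_max_left δ 0
  calc (c : EReal)
      ≤ (b : EReal) + ((lam - lam₀ : ℝ) : EReal) * (δ : EReal) := by exact_mod_cast hδ
    _ ≤ penaltyFunction I φ lam₀ x + ((lam - lam₀ : ℝ) : EReal) * (φ x : EReal) := by
        gcongr
    _ = penaltyFunction I φ lam x := by
        rw [← penaltyFunction_add hlam₀ (sub_nonneg.2 hlam), add_sub_cancel]

lemma lowerSemicontinuousOn_penaltyFunction [TopologicalSpace X] {A : Set X}
    (hIbot : ∀ x ∈ A, I x ≠ ⊥) (hI : LowerSemicontinuousOn I A) (hφ : LowerSemicontinuousOn φ A)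
    {lam : ℝ} (hlam : 0 ≤ lam) : LowerSemicontinuousOn (penaltyFunction I φ lam) A := by
  have hmul : (fun x => (lam : EReal) * (φ x : EReal))
      = (fun t : ℝ≥0∞ => ((ENNReal.ofReal lam * t : ℝ≥0∞) : EReal)) ∘ φ := by
    ext x
    simp [EReal.coe_ennreal_mul, EReal.coe_ennreal_ofReal, max_eq_left hlam]
  have hmul_lsc : LowerSemicontinuousOn (fun x => (lam : EReal) * (φ x : EReal)) A := by
    rw [hmul]
    refine Continuous.comp_lowerSemicontinuousOn
      (continuous_coe_ennreal_ereal.comp (ENNReal.continuous_const_mul ENNReal.ofReal_ne_top))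
      hφ fun s t hst => ?_
    exact EReal.coe_ennreal_le_coe_ennreal_iff.2 (by gcongr)
  have hmul_bot (x : X) : (lam : EReal) * (φ x : EReal) ≠ ⊥ :=
    (EReal.bot_lt_zero.trans_le (by positivity)).ne'
  exact hI.add' hmul_lsc fun x hx =>
    EReal.continuousAt_add (.inr (hmul_bot x)) (.inl (hIbot x hx))

end Penalty

section PenaltyDescent

variable {X : Type*} [MetricSpace X] {I : X → EReal} {φ : X → ℝ≥0∞} {A : Set X} {x : X}

lemma exists_mem_descentSet_penaltyFunction_ne {L t lam ε : ℝ} (hbot : I x ≠ ⊥) (htop : I x ≠ ⊤)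
    (hφx : φ x ≠ ⊤) (hI : ∀ᶠ y in 𝓝[A \ {x}] x, I y ≤ I x + ((L * dist x y : ℝ) : EReal))
    (hφ : rateOfDescent (fun y => (φ y : EReal)) A x < t) (hlam : 0 ≤ lam)
    (hε : L + lam * t + ε ≤ 0) :
    ∃ y ∈ descentSet (penaltyFunction I φ lam) A ε x, y ≠ x := by
  have hfreq := frequently_le_add_mul_dist_of_rateOfDescent_lt
    (g := fun y => (φ y : EReal)) (EReal.coe_ennreal_ne_bot _) (by simpa using hφx) hφ
  obtain ⟨y, ⟨hφy, hIy⟩, hyA, hyx⟩ :=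
    ((hfreq.and_eventually hI).and_eventually self_mem_nhdsWithin).exists
  refine ⟨y, ⟨hyA, ?_⟩, hyx⟩
  calc penaltyFunction I φ lam y + ((ε * dist x y : ℝ) : EReal)
      ≤ I x + ((L * dist x y : ℝ) : EReal) + lam * (φ x + ((t * dist x y : ℝ) : EReal))
        + ((ε * dist x y : ℝ) : EReal) := by
        unfold penaltyFunction
        gcongr
    _ ≤ penaltyFunction I φ lam x := by
        unfold penaltyFunction
        lift I x to ℝ using ⟨htop, hbot⟩ with i
        lift φ x to ℝ≥0 using hφx with q
        rw [EReal.coe_nnreal_eq_coe_real]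
        norm_cast
        linarith [mul_nonpos_of_nonpos_of_nonneg hε (dist_nonneg (x := x) (y := y))]

theorem penaltyFunction_exact_of_descentSet {M : Set X} {c : EReal} {b lam ε : ℝ}
    (hA : IsComplete A) (hIbot : ∀ x ∈ A, I x ≠ ⊥) (hI : LowerSemicontinuousOn I A)
    (hφ : LowerSemicontinuousOn φ A) (hφM : ∀ x ∈ M ∩ A, φ x = 0) (hlam : 0 ≤ lam)
    (hb : ∀ x ∈ A, (b : EReal) ≤ penaltyFunction I φ lam x) (hε : 0 < ε)
    (hc : ⨅ x ∈ M ∩ A, I x < c)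
    (hM : ∀ x ∈ A, penaltyFunction I φ lam x < c →
      descentSet (penaltyFunction I φ lam) A ε x ⊆ {x} → x ∈ M) :
    (⨅ x ∈ A, penaltyFunction I φ lam x) = (⨅ x ∈ M ∩ A, I x) ∧
      {x | x ∈ A ∧ ∀ y ∈ A, penaltyFunction I φ lam x ≤ penaltyFunction I φ lam y}
        = {x | x ∈ M ∩ A ∧ ∀ y ∈ M ∩ A, I x ≤ I y} := by
  have hΩ : ∀ x ∈ M ∩ A, penaltyFunction I φ lam x = I x := fun x hx =>
    penaltyFunction_of_eq_zero (hφM x hx) lam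
  have hbot : ∀ x ∈ A, penaltyFunction I φ lam x ≠ ⊥ := fun x hx =>
    ne_bot_of_le_ne_bot (EReal.coe_ne_bot b) (hb x hx)
  rw [← biInf_congr hΩ] at hc ⊢
  have hinf := biInf_eq_biInf_inter_of_descentSet hA
    (lowerSemicontinuousOn_penaltyFunction hIbot hI hφ hlam) hb hε hc hM
  refine ⟨hinf, (setOf_forall_le_eq_inter_of_descentSet hbot hε hc hM hinf).trans ?_⟩
  ext x
  exact and_congr_right fun hx => forall₂_congr fun y hy => by rw [hΩ x hx, hΩ y hy]

end PenaltyDescent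

theorem exact_penalty_optimal_values_and_global_minimisers_general
    {X : Type*} [MetricSpace X] (M A : Set X) (hA : IsComplete A)
    (I : X → EReal) (hInotbot : ∀ x, I x ≠ ⊥)
    (φ : X → ℝ≥0∞) (hφM : ∀ x, φ x = 0 ↔ x ∈ M)
    (hIlsc : LowerSemicontinuousOn I A) (hφlsc : LowerSemicontinuousOn φ A)
    (c lam₀ δ : ℝ) (hc : ⨅ x ∈ M ∩ A, I x < (c : EReal)) (hlam₀ : 0 ≤ lam₀) (hδ : 0 < δ)
    (hLip : ∃ (V : Set X) (L : ℝ≥0), IsOpen V ∧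
      {x | x ∈ A ∧ penaltyFunction I φ lam₀ x < (c : EReal) ∧ φ x < ENNReal.ofReal δ} ⊆ V ∧
      (∀ x ∈ V, I x ≠ ⊤) ∧ LipschitzOnWith L (fun x => (I x).toReal) V)
    (hdesc : ∃ a : ℝ, 0 < a ∧
      ∀ x ∈ {x | x ∈ A ∧ penaltyFunction I φ lam₀ x < (c : EReal) ∧ φ x < ENNReal.ofReal δ}
          \ (M ∩ A),
        rateOfDescent (fun y => (φ y : EReal)) A x ≤ ((-a : ℝ) : EReal))
    (hbdd : ∃ b : ℝ, ∀ x ∈ A, (b : EReal) ≤ penaltyFunction I φ lam₀ x) :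
    ∃ lamStar : ℝ, 0 ≤ lamStar ∧ ∀ lam : ℝ, lamStar ≤ lam →
      (⨅ x ∈ A, penaltyFunction I φ lam x) = (⨅ x ∈ M ∩ A, I x) ∧
      {x | x ∈ A ∧ ∀ y ∈ A, penaltyFunction I φ lam x ≤ penaltyFunction I φ lam y}
        = {x | x ∈ M ∩ A ∧ ∀ y ∈ M ∩ A, I x ≤ I y} := by
  obtain ⟨V, L, hVopen, hSV, hVtop, hVL⟩ := hLip
  obtain ⟨a, ha, hdesc⟩ := hdesc
  obtain ⟨b, hb⟩ := hbdd
  refine ⟨max lam₀ (max (lam₀ + (c - b) / δ) ((L + 1) / (a / 2))), le_max_of_le_left hlam₀,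
    fun lam hlam => ?_⟩
  obtain ⟨hlam₀_le, hlamδ, hlam_a⟩ := by simpa only [max_le_iff] using hlam
  have hlam_nonneg : 0 ≤ lam := hlam₀.trans hlam₀_le
  have hlamδ' : c ≤ b + (lam - lam₀) * δ := by
    linarith [(div_le_iff₀ hδ).1 (le_sub_iff_add_le'.2 hlamδ)]
  have hlam_a' : L + lam * (-(a / 2)) + 1 ≤ 0 := by
    linarith [(div_le_iff₀ (half_pos ha)).1 hlam_a]
  refine penaltyFunction_exact_of_descentSet hA (fun x _ => hInotbot x) hIlsc hφlsc
    (fun x hx => (hφM x).2 hx.1) hlam_nonneg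
    (fun x hx => (hb x hx).trans (penaltyFunction_mono hlam₀_le)) one_pos hc ?_
  intro x hxA hxc hx
  by_contra hxM
  have hφδ := lt_ofReal_of_penaltyFunction_lt hlam₀ hlam₀_le (hb x hxA) hlamδ' hxc
  have hxS := And.intro hxA (And.intro ((penaltyFunction_mono hlam₀_le).trans_lt hxc) hφδ)
  have hrate : rateOfDescent (fun y => (φ y : EReal)) A x < ((-(a / 2) : ℝ) : EReal) :=
    (hdesc x ⟨hxS, fun h => hxM h.1⟩).trans_lt (by exact_mod_cast neg_lt_neg (half_lt_self ha))
  have hI := eventually_le_add_mul_dist_of_lipschitzOnWith_toReal (hInotbot x) hVtop hVL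
    (hVopen.mem_nhds (hSV hxS))
  obtain ⟨y, hy, hyx⟩ := exists_mem_descentSet_penaltyFunction_ne (hInotbot x)
    (hVtop x (hSV hxS)) hφδ.ne_top (hI.filter_mono nhdsWithin_le_nhds) hrate hlam_nonneg hlam_a'
  exact hyx (hx hy)

/-- Main theorem, parts 1 and 2: under the stated assumptions there exists `λ* ≥ 0` such that for
all `λ ≥ λ*` the optimal values of the penalised problem and of `(P)` coincide, and the global
minimisers of `Φ_λ` on `A` coincide with the global minimisers of `I` on `Ω = M ∩ A`. -/
theorem exact_penalty_optimal_values_and_global_minimisers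
    {X : Type*} [MetricSpace X] [CompleteSpace X]
    (M A : Set X) (hA : IsClosed A)
    (I : X → EReal) (hInotbot : ∀ x, I x ≠ ⊥)
    (φ : X → ℝ≥0∞) (hφM : ∀ x, φ x = 0 ↔ x ∈ M)
    (Φ : ℝ → X → EReal)
    (hΦdef : ∀ lam x, Φ lam x = I x + (lam : EReal) * ((φ x : ℝ≥0∞) : EReal))
    (hIlsc : LowerSemicontinuousOn I A) (hφlsc : LowerSemicontinuousOn φ A)
    (hφcont : ∀ x ∈ M ∩ A, ContinuousAt φ x)
    -- the problem (P) has a globally optimal solution with finite optimal value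
    (xs : X) (hxs : xs ∈ M ∩ A) (hxsmin : ∀ y ∈ M ∩ A, I xs ≤ I y) (hxsfin : I xs ≠ ⊤)
    (c lam₀ δ : ℝ) (hc : I xs < ((c : ℝ) : EReal)) (hlam₀ : 0 < lam₀) (hδ : 0 < δ)
    -- (i) `I` is Lipschitz continuous on an open set containing `S_{λ₀}(c) ∩ Ω_δ`
    (hLip : ∃ (V : Set X) (L : ℝ≥0), IsOpen V ∧
      {x | x ∈ A ∧ Φ lam₀ x < ((c : ℝ) : EReal) ∧ φ x < ENNReal.ofReal δ} ⊆ V ∧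
      (∀ x ∈ V, I x ≠ ⊤) ∧ LipschitzOnWith L (fun x => (I x).toReal) V)
    -- (ii) the rate of steepest descent of `φ` w.r.t. `A` is ≤ −a < 0 on `S_{λ₀}(c) ∩ (Ω_δ \ Ω)`
    (hdesc : ∃ a : ℝ, 0 < a ∧
      ∀ x ∈ {x | x ∈ A ∧ Φ lam₀ x < ((c : ℝ) : EReal) ∧ φ x < ENNReal.ofReal δ} \ (M ∩ A),
        rateOfDescent (fun y => ((φ y : ℝ≥0∞) : EReal)) A x ≤ ((-a : ℝ) : EReal))
    -- (iii) `Φ_{λ₀}` is bounded below on `A`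
    (hbdd : ∃ b : ℝ, ∀ x ∈ A, ((b : ℝ) : EReal) ≤ Φ lam₀ x) :
    ∃ lamStar : ℝ, 0 ≤ lamStar ∧ ∀ lam : ℝ, lamStar ≤ lam →
      (⨅ x ∈ A, Φ lam x) = (⨅ x ∈ M ∩ A, I x) ∧
      {x | x ∈ A ∧ ∀ y ∈ A, Φ lam x ≤ Φ lam y}
        = {x | x ∈ M ∩ A ∧ ∀ y ∈ M ∩ A, I x ≤ I y} := by
  obtain rfl : Φ = penaltyFunction I φ := funext₂ hΦdef
  exact exact_penalty_optimal_values_and_global_minimisers_general M A hA.isComplete I hInotbot φ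
    hφM hIlsc hφlsc c lam₀ δ ((iInf₂_le xs hxs).trans_lt hc) hlam₀.le hδ hLip hdesc hbdd
end

section
/- Suppose X is complete, A is closed, I and φ are lower semicontinuous on A, φ is continuous at every point of Ω, and there exist c > I*, λ₀ > 0 and δ > 0 such that I is Lipschitz continuous with Lipschitz constant L on an open set containing S_{λ₀}(c) ∩ Ω_δ, there exists a > 0 such that φ↓_A(x) ≤ −a for all x ∈ S_{λ₀}(c) ∩ (Ω_δ \ Ω), and Φ_{λ₀} is bounded below on A. Let x* ∈ S_{λ₀}(c) ∩ Ω be an inf-stationary point of I on Ω. Then for any L' > L there exists r > 0 such that I(x) − I(x*) ≥ −L'·dist(x,Ω) − (L' − L)·d(x,x*) for all x ∈ B(x*,r), where B(x*,r) = {y ∈ X : d(y,x*) ≤ r} and dist(x,Ω) = inf_{y∈Ω} d(x,y). -/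
open Filter Metric Set Topology
open scoped ENNReal NNReal

/-!
Let `ε = L' - L` and let `x` be close to `x*`. For `y ∈ Ω`, Lipschitz continuity controls the
decrease of `I` from `y` to `x` by `L * d(x, y)`, and stationarity controls its decrease from `x*`
to `y` by `ε * d(y, x*) ≤ ε * (d(x, y) + d(x, x*))`. Both estimates are local, but only the points
`y ∈ Ω` no farther from `x` than `x*` is matter for the distance from `x` to `Ω`, and these are
close to `x*`. It remains to take the infimum over `y`.
-/

section RealValued

variable {X : Type*} [PseudoMetricSpace X]

lemma le_mul_infDist {s : Set X} {x : X} {b C : ℝ} (hC : 0 ≤ C) (hs : s.Nonempty)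
    (h : ∀ y ∈ s, b ≤ C * dist x y) : b ≤ C * infDist x s := by
  have : Nonempty s := hs.to_subtype
  rw [infDist_eq_iInf, Real.mul_iInf_of_nonneg hC]
  exact le_ciInf fun y => h y y.2

lemma le_mul_infDist_of_forall_dist_le {s : Set X} {x x₀ : X} {b C : ℝ} (hC : 0 ≤ C)
    (hx₀ : x₀ ∈ s) (h : ∀ y ∈ s, dist x y ≤ dist x x₀ → b ≤ C * dist x y) :
    b ≤ C * infDist x s := by
  refine le_mul_infDist hC ⟨x₀, hx₀⟩ fun y hy => ?_
  rcases le_total (dist x y) (dist x x₀) with hxy | hxy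
  · exact h y hy hxy
  · exact (h x₀ hx₀ le_rfl).trans (mul_le_mul_of_nonneg_left hxy hC)

lemma eventually_forall_dist_le {x₀ : X} {p : X → Prop} (hp : ∀ᶠ y in 𝓝 x₀, p y) :
    ∀ᶠ x in 𝓝 x₀, ∀ y, dist x y ≤ dist x x₀ → p y := by
  obtain ⟨r, hr, hball⟩ := Metric.eventually_nhds_iff_ball.1 hp
  filter_upwards [ball_mem_nhds x₀ (half_pos hr)] with x hx y hxy
  refine hball y ?_
  calc dist y x₀ ≤ dist x y + dist x x₀ := dist_triangle_left y x₀ x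
    _ ≤ dist x x₀ + dist x x₀ := by gcongr
    _ < r / 2 + r / 2 := add_lt_add hx hx
    _ = r := add_halves r

lemma eventually_sub_le_mul_infDist_add_mul_dist {f : X → ℝ} {K V : Set X} {x₀ : X} {L : ℝ≥0}
    {ε : ℝ} (hε : 0 ≤ ε) (hx₀ : x₀ ∈ K) (hV : V ∈ 𝓝 x₀) (hf : LipschitzOnWith L f V)
    (hdesc : ∀ᶠ y in 𝓝[K] x₀, f x₀ - f y ≤ ε * dist y x₀) :
    ∀ᶠ x in 𝓝 x₀, f x₀ - f x ≤ (L + ε) * infDist x K + ε * dist x x₀ := by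
  have hnear := eventually_forall_dist_le
    ((eventually_mem_set.2 hV).and (eventually_nhdsWithin_iff.1 hdesc))
  filter_upwards [hV, hnear] with x hxV hx
  rw [← sub_le_iff_le_add]
  refine le_mul_infDist_of_forall_dist_le (by positivity) hx₀ fun y hyK hxy => ?_
  obtain ⟨hyV, hy⟩ := hx y hxy
  have hlip : f y - f x ≤ L * dist x y := by
    rw [dist_comm]
    exact (le_abs_self _).trans (hf.dist_le_mul y hyV x hxV)
  have htri : ε * dist y x₀ ≤ ε * (dist x y + dist x x₀) := by
    gcongr
    exact dist_triangle_left y x₀ x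
  linarith [hy hyK]

end RealValued

section RateOfDescent

variable {X : Type*} [MetricSpace X]

lemma eventually_mul_dist_le_of_lt_rateOfDescent {g : X → EReal} {K : Set X} {x : X} {m : EReal}
    (hbot : g x ≠ ⊥) (htop : g x ≠ ⊤) (hm : m < rateOfDescent g K x) :
    ∀ᶠ y in 𝓝[K] x, m * (dist y x : EReal) ≤ g y - g x := by
  have hquot := eventually_nhdsWithin_iff.1 (eventually_lt_of_lt_liminf hm)
  rw [eventually_nhdsWithin_iff]
  filter_upwards [hquot] with y hy hyK
  rcases eq_or_ne y x with rfl | hyx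
  · simp [EReal.sub_self htop hbot]
  · have hdist : (0 : EReal) < dist y x := EReal.coe_pos.2 (dist_pos.2 hyx)
    rw [← EReal.le_div_iff_mul_le hdist (EReal.coe_ne_top _), EReal.div_eq_inv_mul, mul_comm,
      ← EReal.coe_inv]
    exact (hy ⟨hyK, hyx⟩).le

theorem exact_penalty_lipschitz_estimate_general {I : X → EReal} {K V : Set X} {x₀ : X}
    {L : ℝ≥0} {L' : ℝ} (hx₀ : x₀ ∈ K) (hV : V ∈ 𝓝 x₀) (hbot : ∀ x ∈ V, I x ≠ ⊥)
    (htop : ∀ x ∈ V, I x ≠ ⊤) (hLip : LipschitzOnWith L (fun x => (I x).toReal) V)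
    (hL' : L ≤ L') (hrate : ((-(L' - L) : ℝ) : EReal) < rateOfDescent I K x₀) :
    ∃ r : ℝ, 0 < r ∧ ∀ x ∈ closedBall x₀ r,
      ((-(L' * infDist x K) - (L' - L) * dist x x₀ : ℝ) : EReal) ≤ I x - I x₀ := by
  have hx₀V : x₀ ∈ V := mem_of_mem_nhds hV
  have hsub : ∀ x ∈ V, I x - I x₀ = (((I x).toReal - (I x₀).toReal : ℝ) : EReal) := fun x hx => by
    rw [EReal.coe_sub, EReal.coe_toReal (htop x hx) (hbot x hx),
      EReal.coe_toReal (htop x₀ hx₀V) (hbot x₀ hx₀V)]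
  have hdesc : ∀ᶠ y in 𝓝[K] x₀, (I x₀).toReal - (I y).toReal ≤ (L' - L) * dist y x₀ := by
    filter_upwards [mem_nhdsWithin_of_mem_nhds hV, eventually_mul_dist_le_of_lt_rateOfDescent
      (hbot x₀ hx₀V) (htop x₀ hx₀V) hrate] with y hyV hy
    rw [hsub y hyV, ← EReal.coe_mul, EReal.coe_le_coe_iff] at hy
    linarith
  refine nhds_basis_closedBall.eventually_iff.1 ?_
  filter_upwards [hV, eventually_sub_le_mul_infDist_add_mul_dist (sub_nonneg.2 hL') hx₀ hV hLip
    hdesc] with x hxV hx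
  rw [hsub x hxV, EReal.coe_le_coe_iff]
  rw [add_sub_cancel] at hx
  linarith

end RateOfDescent

/-- Lemma A.2: under the assumptions of the main theorem, if `x* ∈ S_{λ₀}(c) ∩ Ω` is an
inf-stationary point of `I` on `Ω`, then for any `L' > L` there exists `r > 0` such that
`I(x) − I(x*) ≥ −L'·dist(x,Ω) − (L' − L)·d(x,x*)` for all `x ∈ B(x*, r)`. -/
theorem exact_penalty_lipschitz_estimate
    {X : Type*} [MetricSpace X] [CompleteSpace X]
    (M A : Set X) (hA : IsClosed A)
    (I : X → EReal) (hInotbot : ∀ x, I x ≠ ⊥)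
    (φ : X → ℝ≥0∞) (hφM : ∀ x, φ x = 0 ↔ x ∈ M)
    (Φ : ℝ → X → EReal)
    (hΦdef : ∀ lam x, Φ lam x = I x + (lam : EReal) * ((φ x : ℝ≥0∞) : EReal))
    (hIlsc : LowerSemicontinuousOn I A) (hφlsc : LowerSemicontinuousOn φ A)
    (hφcont : ∀ x ∈ M ∩ A, ContinuousAt φ x)
    -- the problem (P) has a globally optimal solution with finite optimal value
    (xs : X) (hxs : xs ∈ M ∩ A) (hxsmin : ∀ y ∈ M ∩ A, I xs ≤ I y) (hxsfin : I xs ≠ ⊤)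
    (c lam₀ δ : ℝ) (hc : I xs < ((c : ℝ) : EReal)) (hlam₀ : 0 < lam₀) (hδ : 0 < δ)
    -- (i) `I` is Lipschitz continuous with constant `L` on an open set containing
    -- `S_{λ₀}(c) ∩ Ω_δ`
    (L : ℝ≥0)
    (hLip : ∃ V : Set X, IsOpen V ∧
      {x | x ∈ A ∧ Φ lam₀ x < ((c : ℝ) : EReal) ∧ φ x < ENNReal.ofReal δ} ⊆ V ∧
      (∀ x ∈ V, I x ≠ ⊤) ∧ LipschitzOnWith L (fun x => (I x).toReal) V)
    -- (ii) the rate of steepest descent of `φ` w.r.t. `A` is ≤ −a < 0 on `S_{λ₀}(c) ∩ (Ω_δ \ Ω)`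
    (a : ℝ) (ha : 0 < a)
    (hdesc : ∀ x ∈ {x | x ∈ A ∧ Φ lam₀ x < ((c : ℝ) : EReal) ∧ φ x < ENNReal.ofReal δ} \ (M ∩ A),
        rateOfDescent (fun y => ((φ y : ℝ≥0∞) : EReal)) A x ≤ ((-a : ℝ) : EReal))
    -- (iii) `Φ_{λ₀}` is bounded below on `A`
    (hbdd : ∃ b : ℝ, ∀ x ∈ A, ((b : ℝ) : EReal) ≤ Φ lam₀ x) :
    ∀ xstar ∈ {x | x ∈ A ∧ Φ lam₀ x < ((c : ℝ) : EReal) ∧ φ x < ENNReal.ofReal δ} ∩ (M ∩ A),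
      (0 : EReal) ≤ rateOfDescent I (M ∩ A) xstar →
      ∀ L' : ℝ, (L : ℝ) < L' →
        ∃ r : ℝ, 0 < r ∧ ∀ x ∈ Metric.closedBall xstar r,
          ((-(L' * Metric.infDist x (M ∩ A)) - (L' - (L : ℝ)) * dist x xstar : ℝ) : EReal)
            ≤ I x - I xstar := by
  rintro xstar ⟨hS, hΩ⟩ hstat L' hL'
  obtain ⟨V, hVopen, hSV, htop, hV⟩ := hLip
  exact exact_penalty_lipschitz_estimate_general hΩ (hVopen.mem_nhds (hSV hS))
    (fun x _ => hInotbot x) htop hV hL'.le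
    ((EReal.coe_neg'.2 (neg_neg_of_pos (sub_pos.2 hL'))).trans_le hstat)
end
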